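/- Let f_1, …, f_n : ℝ^d → ℝ be differentiable, each f_i convex and L_i-smooth (‖∇f_i(u) − ∇f_i(v)‖ ≤ L_i‖u − v‖ for all u, v), let L_max = max_i L_i, and suppose f = (1/n)·Σ_{i=1}^n f_i is m-strongly convex (m > 0) with minimizer x⋆. Fix x ∈ ℝ^d and a batch size b ≥ 1, let k_1, …, k_b be i.i.d. uniform random indices in {1, …, n}, and set ∇̂f(x) = (1/b)·Σ_{j=1}^b ∇f_{k_j}(x). Then E‖∇̂f(x) − ∇f(x)‖² ≤ (2L_max/(b·m))·‖∇f(x)‖² + (2/(b·n))·Σ_{i=1}^n ‖∇f_i(x⋆)‖². -/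

import Mathlib

open Finset
open scoped InnerProductSpace

/-!
The mini-batch gradient is the sample mean of `b` independent draws from the component gradients
`∇fᵢ(x)`. Its variance is therefore `1/b` times the variance of a single draw, which is at most the
second moment of `∇fᵢ(x) = (∇fᵢ(x) - ∇fᵢ(x⋆)) + ∇fᵢ(x⋆)`. For a convex `L`-smooth function, the
squared gradient increment is at most `2L` times the Bregman divergence. Averaged over the
components, the linear terms cancel because `∇f(x⋆) = 0`, leaving `2L (f(x) - f(x⋆))`, and strong
convexity enters only through the Polyak–Łojasiewicz inequality `f(x) - f(x⋆) ≤ ‖∇f(x)‖² / (2m)`.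
-/

section UniformMean

/-- The uniform mean `(1 / |ι|) ∑ i, a i` of a finite family of vectors, that is, the expectation of
`a` at a uniformly random index; it is `0` if `ι` is empty. Scalars are real, unlike in
`Finset.expect`, so that any real vector space can be the codomain. Independent uniform indices
`k₁, …, k_b` in `ι` are encoded as one uniform element of `Fin b → ι`. -/
noncomputable def uniformMean {ι E : Type*} [Fintype ι] [AddCommGroup E] [Module ℝ E]
    (a : ι → E) : E :=
  (Fintype.card ι : ℝ)⁻¹ • ∑ i, a i

variable {ι E : Type*} [Fintype ι]

section Module

variable [AddCommGroup E] [Module ℝ E]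

lemma uniformMean_add (a c : ι → E) :
    uniformMean (fun i => a i + c i) = uniformMean a + uniformMean c := by
  simp only [uniformMean, sum_add_distrib, smul_add]

lemma uniformMean_sub (a c : ι → E) :
    uniformMean (fun i => a i - c i) = uniformMean a - uniformMean c := by
  simp only [uniformMean, sum_sub_distrib, smul_sub]

lemma uniformMean_smul (r : ℝ) (a : ι → E) :
    uniformMean (fun i => r • a i) = r • uniformMean a := by
  simp only [uniformMean, ← smul_sum, smul_comm r]

lemma uniformMean_const [Nonempty ι] (v : E) : uniformMean (fun _ : ι => v) = v := by
  simp [uniformMean, ← Nat.cast_smul_eq_nsmul ℝ, smul_smul]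

lemma uniformMean_sub_uniformMean [Nonempty ι] (a : ι → E) :
    uniformMean (fun i => a i - uniformMean a) = 0 := by
  rw [uniformMean_sub, uniformMean_const, sub_self]

lemma uniformMean_fin_succ {b : ℕ} (F : (Fin (b + 1) → ι) → E) :
    uniformMean F = uniformMean fun i => uniformMean fun σ => F (Fin.cons i σ) := by
  simp only [uniformMean, ← smul_sum, smul_smul]
  rw [← (Fin.consEquiv fun _ => ι).sum_comp, Fintype.sum_prod_type]
  simp [Fin.consEquiv, pow_succ, mul_comm]

end Module

lemma uniformMean_mul (r : ℝ) (a : ι → ℝ) : uniformMean (fun i => r * a i) = r * uniformMean a :=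
  uniformMean_smul r a

lemma uniformMean_le_uniformMean {a c : ι → ℝ} (h : ∀ i, a i ≤ c i) :
    uniformMean a ≤ uniformMean c :=
  smul_le_smul_of_nonneg_left (sum_le_sum fun i _ => h i) (by positivity)

lemma uniformMean_norm_add_sq_le [SeminormedAddCommGroup E] (a c : ι → E) :
    uniformMean (fun i => ‖a i + c i‖ ^ 2) ≤
      2 * uniformMean (fun i => ‖a i‖ ^ 2) + 2 * uniformMean (fun i => ‖c i‖ ^ 2) := by
  rw [← uniformMean_mul, ← uniformMean_mul, ← uniformMean_add]
  refine uniformMean_le_uniformMean fun i => ?_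
  calc ‖a i + c i‖ ^ 2 ≤ (‖a i‖ + ‖c i‖) ^ 2 := by gcongr; exact norm_add_le _ _
    _ ≤ 2 * (‖a i‖ ^ 2 + ‖c i‖ ^ 2) := add_sq_le
    _ = 2 * ‖a i‖ ^ 2 + 2 * ‖c i‖ ^ 2 := mul_add _ _ _

variable [NormedAddCommGroup E] [InnerProductSpace ℝ E]

lemma uniformMean_inner_left (a : ι → E) (v : E) :
    uniformMean (fun i => ⟪a i, v⟫_ℝ) = ⟪uniformMean a, v⟫_ℝ := by
  simp only [uniformMean, real_inner_smul_left, sum_inner, smul_eq_mul]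

lemma uniformMean_inner_right (v : E) (a : ι → E) :
    uniformMean (fun i => ⟪v, a i⟫_ℝ) = ⟪v, uniformMean a⟫_ℝ := by
  simp only [real_inner_comm _ v, uniformMean_inner_left]

variable [Nonempty ι]

lemma uniformMean_norm_sub_uniformMean_sq (a : ι → E) :
    uniformMean (fun i => ‖a i - uniformMean a‖ ^ 2) =
      uniformMean (fun i => ‖a i‖ ^ 2) - ‖uniformMean a‖ ^ 2 := by
  simp only [norm_sub_sq_real, uniformMean_add, uniformMean_sub, uniformMean_mul,
    uniformMean_inner_left, uniformMean_const, real_inner_self_eq_norm_sq]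
  ring

lemma uniformMean_norm_sum_sq_of_uniformMean_eq_zero {a : ι → E} (ha : uniformMean a = 0) (b : ℕ) :
    uniformMean (fun σ : Fin b → ι => ‖∑ j, a (σ j)‖ ^ 2) =
      b * uniformMean (fun i => ‖a i‖ ^ 2) := by
  induction b with
  | zero => simp [uniformMean]
  | succ b ih =>
    simp only [uniformMean_fin_succ, Fin.sum_univ_succ, Fin.cons_zero, Fin.cons_succ,
      norm_add_sq_real, uniformMean_add, uniformMean_mul, uniformMean_inner_left,
      uniformMean_inner_right, uniformMean_const, ha, inner_zero_left, ih]
    push_cast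
    ring

theorem uniformMean_norm_sampleMean_sub_sq (a : ι → E) {b : ℕ} (hb : 0 < b) :
    uniformMean (fun σ : Fin b → ι => ‖uniformMean (fun j => a (σ j)) - uniformMean a‖ ^ 2) =
      (b : ℝ)⁻¹ * uniformMean (fun i => ‖a i - uniformMean a‖ ^ 2) := by
  have : Nonempty (Fin b) := ⟨0, hb⟩
  have centered (σ : Fin b → ι) : ‖uniformMean (fun j => a (σ j)) - uniformMean a‖ ^ 2 =
      ((b : ℝ)⁻¹) ^ 2 * ‖∑ j, (a (σ j) - uniformMean a)‖ ^ 2 := by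
    calc ‖uniformMean (fun j => a (σ j)) - uniformMean a‖ ^ 2
      _ = ‖uniformMean (fun j => a (σ j) - uniformMean a)‖ ^ 2 := by
        rw [uniformMean_sub, uniformMean_const]
      _ = ((b : ℝ)⁻¹) ^ 2 * ‖∑ j, (a (σ j) - uniformMean a)‖ ^ 2 := by
        rw [uniformMean, Fintype.card_fin, norm_smul, mul_pow, Real.norm_of_nonneg (by positivity)]
  simp only [centered, uniformMean_mul]
  rw [uniformMean_norm_sum_sq_of_uniformMean_eq_zero (uniformMean_sub_uniformMean a)]
  field_simp

theorem uniformMean_norm_sampleMean_sub_sq_le (a c : ι → E) {b : ℕ} (hb : 0 < b) :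
    uniformMean (fun σ : Fin b → ι => ‖uniformMean (fun j => a (σ j)) - uniformMean a‖ ^ 2) ≤
      (b : ℝ)⁻¹ * (2 * uniformMean (fun i => ‖a i - c i‖ ^ 2) +
        2 * uniformMean fun i => ‖c i‖ ^ 2) := by
  rw [uniformMean_norm_sampleMean_sub_sq a hb]
  gcongr
  calc uniformMean (fun i => ‖a i - uniformMean a‖ ^ 2)
    _ = uniformMean (fun i => ‖a i‖ ^ 2) - ‖uniformMean a‖ ^ 2 :=
      uniformMean_norm_sub_uniformMean_sq a
    _ ≤ uniformMean (fun i => ‖a i‖ ^ 2) := sub_le_self _ (sq_nonneg _)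
    _ = uniformMean (fun i => ‖a i - c i + c i‖ ^ 2) := by simp only [sub_add_cancel]
    _ ≤ 2 * uniformMean (fun i => ‖a i - c i‖ ^ 2) + 2 * uniformMean (fun i => ‖c i‖ ^ 2) :=
      uniformMean_norm_add_sq_le _ _

end UniformMean

section Gradient

variable {E : Type*} [NormedAddCommGroup E] [InnerProductSpace ℝ E]

lemma sub_le_norm_sq_div_of_strongly_convex {f : E → ℝ} {f' : E → E} {m : ℝ} (hm : 0 < m)
    (hsc : ∀ u v, f u + ⟪f' u, v - u⟫_ℝ + m / 2 * ‖v - u‖ ^ 2 ≤ f v) (x y : E) :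
    f x - f y ≤ ‖f' x‖ ^ 2 / (2 * m) := by
  have young : -⟪f' x, y - x⟫_ℝ ≤ ‖f' x‖ ^ 2 / (2 * m) + m / 2 * ‖y - x‖ ^ 2 := by
    calc -⟪f' x, y - x⟫_ℝ ≤ ‖f' x‖ * ‖y - x‖ :=
        neg_le.1 (neg_le_of_abs_le (abs_real_inner_le_norm _ _))
      _ ≤ ‖f' x‖ * ‖y - x‖ + (‖f' x‖ - m * ‖y - x‖) ^ 2 / (2 * m) :=
        le_add_of_nonneg_right (by positivity)
      _ = ‖f' x‖ ^ 2 / (2 * m) + m / 2 * ‖y - x‖ ^ 2 := by field_simp; ring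
  linarith [hsc x y]

variable [CompleteSpace E]

lemma gradient_eq_zero_of_isLocalMin {f : E → ℝ} {p u : E} (h : IsLocalMin f u)
    (hf : HasGradientAt f p u) : p = 0 :=
  (InnerProductSpace.toDual ℝ E).map_eq_zero_iff.1 (h.hasFDerivAt_eq_zero hf.hasFDerivAt)

lemma apply_add_le_of_lipschitz_gradient {g : E → ℝ} {g' : E → E} {L : ℝ}
    (hgrad : ∀ u, HasGradientAt g (g' u) u) (hsmooth : ∀ u v, ‖g' u - g' v‖ ≤ L * ‖u - v‖)
    (u w : E) : g (u + w) ≤ g u + ⟪g' u, w⟫_ℝ + L / 2 * ‖w‖ ^ 2 := by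
  have hline (t : ℝ) : HasDerivAt (fun t : ℝ => g (u + t • w)) ⟪g' (u + t • w), w⟫_ℝ t := by
    have hpath : HasDerivAt (fun t : ℝ => u + t • w) w t := by
      simpa using ((hasDerivAt_id t).smul_const w).const_add u
    exact (hgrad (u + t • w)).hasFDerivAt.comp_hasDerivAt t hpath
  have hquad (t : ℝ) : HasDerivAt (fun t : ℝ => g u + t * ⟪g' u, w⟫_ℝ + t ^ 2 * (L / 2 * ‖w‖ ^ 2))
      (⟪g' u, w⟫_ℝ + t * (L * ‖w‖ ^ 2)) t := by
    refine ((((hasDerivAt_id t).mul_const ⟪g' u, w⟫_ℝ).const_add (g u)).add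
      ((hasDerivAt_pow 2 t).mul_const (L / 2 * ‖w‖ ^ 2))).congr_deriv ?_
    simp only [Nat.cast_ofNat, Nat.add_one_sub_one, pow_one, one_mul]
    ring
  have hderiv_le (t : ℝ) (ht : 0 ≤ t) :
      ⟪g' (u + t • w), w⟫_ℝ ≤ ⟪g' u, w⟫_ℝ + t * (L * ‖w‖ ^ 2) := by
    rw [← sub_le_iff_le_add', ← inner_sub_left]
    calc ⟪g' (u + t • w) - g' u, w⟫_ℝ ≤ ‖g' (u + t • w) - g' u‖ * ‖w‖ := real_inner_le_norm _ _
      _ ≤ L * ‖u + t • w - u‖ * ‖w‖ := by gcongr; exact hsmooth _ _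
      _ = t * (L * ‖w‖ ^ 2) := by
        rw [add_sub_cancel_left, norm_smul, Real.norm_of_nonneg ht]
        ring
  have hle := image_le_of_deriv_right_le_deriv_boundary
    (fun t _ => (hline t).continuousAt.continuousWithinAt)
    (fun t _ => (hline t).hasDerivWithinAt) (by simp)
    (fun t _ => (hquad t).continuousAt.continuousWithinAt)
    (fun t _ => (hquad t).hasDerivWithinAt) (fun t ht => hderiv_le t ht.1)
    (Set.right_mem_Icc.2 zero_le_one)
  simpa using hle

/-- The right-hand side is `2 * L` times the Bregman divergence of `g`. -/
lemma norm_gradient_sub_sq_le_of_convex {g : E → ℝ} {g' : E → E} {L : ℝ} (hL : 0 ≤ L)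
    (hgrad : ∀ u, HasGradientAt g (g' u) u) (hconv : ∀ u v, g u + ⟪g' u, v - u⟫_ℝ ≤ g v)
    (hsmooth : ∀ u v, ‖g' u - g' v‖ ≤ L * ‖u - v‖) (x y : E) :
    ‖g' x - g' y‖ ^ 2 ≤ 2 * L * (g x - g y - ⟪g' y, x - y⟫_ℝ) := by
  rcases hL.eq_or_lt with rfl | hL
  · have hxy : ‖g' x - g' y‖ = 0 := le_antisymm (by simpa using hsmooth x y) (norm_nonneg _)
    simp [hxy]
  -- The gradient step `x - L⁻¹ • (g' x - g' y)` minimizes the quadratic upper bound at `x`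
  -- minus the affine lower bound at `y`.
  set D := g' x - g' y with hD
  have upper := apply_add_le_of_lipschitz_gradient hgrad hsmooth x (-(L⁻¹ • D))
  have lower := hconv y (x + -(L⁻¹ • D))
  have hnorm : L / 2 * ‖-(L⁻¹ • D)‖ ^ 2 = ‖D‖ ^ 2 / (2 * L) := by
    rw [norm_neg, norm_smul, Real.norm_of_nonneg (by positivity)]
    field_simp
  have hinner : ⟪g' x, -(L⁻¹ • D)⟫_ℝ - ⟪g' y, -(L⁻¹ • D)⟫_ℝ = -(2 * (‖D‖ ^ 2 / (2 * L))) := by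
    rw [← inner_sub_left, ← hD, inner_neg_right, inner_smul_right, real_inner_self_eq_norm_sq]
    field_simp
  rw [add_sub_right_comm, inner_add_right] at lower
  rw [← div_le_iff₀' (by positivity)]
  linarith

end Gradient

section FiniteSum

variable {ι E : Type*} [Fintype ι] [NormedAddCommGroup E] [InnerProductSpace ℝ E] [CompleteSpace E]
  {g : ι → E → ℝ} {g' : ι → E → E}

lemma hasGradientAt_uniformMean {u : E} (hgrad : ∀ i, HasGradientAt (g i) (g' i u) u) :
    HasGradientAt (fun v => uniformMean fun i => g i v) (uniformMean fun i => g' i u) u := by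
  rw [hasGradientAt_iff_hasFDerivAt, uniformMean, map_smul, map_sum]
  exact (HasFDerivAt.fun_sum fun i _ => (hgrad i).hasFDerivAt).const_smul (Fintype.card ι : ℝ)⁻¹

lemma uniformMean_norm_gradient_sub_sq_le {L : ℝ} (hL : 0 ≤ L)
    (hgrad : ∀ i u, HasGradientAt (g i) (g' i u) u)
    (hconv : ∀ i u v, g i u + ⟪g' i u, v - u⟫_ℝ ≤ g i v)
    (hsmooth : ∀ i u v, ‖g' i u - g' i v‖ ≤ L * ‖u - v‖) (x y : E) :
    uniformMean (fun i => ‖g' i x - g' i y‖ ^ 2) ≤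
      2 * L * ((uniformMean fun i => g i x) - (uniformMean fun i => g i y) -
        ⟪uniformMean fun i => g' i y, x - y⟫_ℝ) := by
  rw [← uniformMean_inner_left, ← uniformMean_sub, ← uniformMean_sub, ← uniformMean_mul]
  exact uniformMean_le_uniformMean fun i =>
    norm_gradient_sub_sq_le_of_convex hL (hgrad i) (hconv i) (hsmooth i) x y

theorem minibatch_growth_condition_general [Nonempty ι] {L m : ℝ} (hm : 0 < m)
    (hgrad : ∀ i u, HasGradientAt (g i) (g' i u) u)
    (hconv : ∀ i u v, g i u + ⟪g' i u, v - u⟫_ℝ ≤ g i v)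
    (hsmooth : ∀ i u v, ‖g' i u - g' i v‖ ≤ L * ‖u - v‖)
    {f : E → ℝ} (hf : ∀ u, f u = uniformMean fun i => g i u)
    {xstar : E} (hstar : ∀ v, f xstar ≤ f v) {x : E}
    (hPL : f x - f xstar ≤ ‖uniformMean fun i => g' i x‖ ^ 2 / (2 * m)) {b : ℕ} (hb : 0 < b) :
    uniformMean (fun σ : Fin b → ι =>
        ‖uniformMean (fun j => g' (σ j) x) - uniformMean fun i => g' i x‖ ^ 2) ≤
      2 * L / (b * m) * ‖uniformMean fun i => g' i x‖ ^ 2 +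
        2 / b * uniformMean fun i => ‖g' i xstar‖ ^ 2 := by
  obtain rfl : f = fun u => uniformMean fun i => g i u := funext hf
  rcases subsingleton_or_nontrivial E with _ | _
  · simp [Subsingleton.elim _ (0 : E), uniformMean]
  have hL : 0 ≤ L := by
    obtain ⟨u, v, huv⟩ := exists_pair_ne E
    exact nonneg_of_mul_nonneg_left ((norm_nonneg _).trans (hsmooth (Classical.arbitrary ι) u v))
      (norm_sub_pos_iff.2 huv)
  set G := uniformMean fun i => g' i x
  have hstationary : uniformMean (fun i => g' i xstar) = 0 :=
    gradient_eq_zero_of_isLocalMin (.of_forall hstar)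
      (hasGradientAt_uniformMean fun i => hgrad i xstar)
  have hsub : uniformMean (fun i => ‖g' i x - g' i xstar‖ ^ 2) ≤ 2 * L * (‖G‖ ^ 2 / (2 * m)) := by
    refine (uniformMean_norm_gradient_sub_sq_le hL hgrad hconv hsmooth x xstar).trans ?_
    rw [hstationary, inner_zero_left, sub_zero]
    gcongr
  calc uniformMean (fun σ : Fin b → ι => ‖uniformMean (fun j => g' (σ j) x) - G‖ ^ 2)
    _ ≤ (b : ℝ)⁻¹ * (2 * uniformMean (fun i => ‖g' i x - g' i xstar‖ ^ 2) +
        2 * uniformMean (fun i => ‖g' i xstar‖ ^ 2)) :=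
      uniformMean_norm_sampleMean_sub_sq_le (fun i => g' i x) (fun i => g' i xstar) hb
    _ ≤ (b : ℝ)⁻¹ * (2 * (2 * L * (‖G‖ ^ 2 / (2 * m))) +
        2 * uniformMean (fun i => ‖g' i xstar‖ ^ 2)) := by gcongr
    _ = 2 * L / (b * m) * ‖G‖ ^ 2 + 2 / b * uniformMean fun i => ‖g' i xstar‖ ^ 2 := by
      field_simp

end FiniteSum

/-- **Growth condition for the mini-batch stochastic gradient in ERM.**
For `f = (1/n) Σ f_i` with each `f_i` convex and `L_i`-smooth, `f` `m`-strongly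
convex with minimizer `x⋆`, and a mini-batch gradient estimator built from `b`
i.i.d. uniform indices (so that the expectation is the uniform average over all
`n^b` index tuples), the variance satisfies
`E‖∇̂f(x) - ∇f(x)‖² ≤ (2 L_max/(b m)) ‖∇f(x)‖² + (2/(b n)) Σ_i ‖∇f_i(x⋆)‖²`. -/
theorem minibatch_growth_condition
    {d : ℕ} (n : ℕ) (hn : 0 < n)
    (g : Fin n → EuclideanSpace ℝ (Fin d) → ℝ)
    (g' : Fin n → EuclideanSpace ℝ (Fin d) → EuclideanSpace ℝ (Fin d))
    (hgrad : ∀ i u, HasGradientAt (g i) (g' i u) u)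
    (Li : Fin n → ℝ) (Lmax : ℝ)
    (hLmax : IsGreatest (Set.range Li) Lmax)
    (hconv : ∀ i u v, g i u + ⟪g' i u, v - u⟫_ℝ ≤ g i v)
    (hsmooth : ∀ i u v, ‖g' i u - g' i v‖ ≤ Li i * ‖u - v‖)
    (f : EuclideanSpace ℝ (Fin d) → ℝ)
    (hf : ∀ u, f u = (n : ℝ)⁻¹ * ∑ i, g i u)
    (m : ℝ) (hm : 0 < m)
    (hsc : ∀ u v, f u + ⟪(n : ℝ)⁻¹ • ∑ i, g' i u, v - u⟫_ℝ + m / 2 * ‖v - u‖ ^ 2 ≤ f v)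
    (xstar : EuclideanSpace ℝ (Fin d)) (hstar : ∀ v, f xstar ≤ f v)
    (x : EuclideanSpace ℝ (Fin d)) (b : ℕ) (hb : 1 ≤ b) :
    ((n : ℝ) ^ b)⁻¹ *
        ∑ σ : Fin b → Fin n,
          ‖(b : ℝ)⁻¹ • (∑ j, g' (σ j) x) - (n : ℝ)⁻¹ • ∑ i, g' i x‖ ^ 2 ≤
      2 * Lmax / (b * m) * ‖(n : ℝ)⁻¹ • ∑ i, g' i x‖ ^ 2
        + 2 / (b * n) * ∑ i, ‖g' i xstar‖ ^ 2 := by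
  have : Nonempty (Fin n) := ⟨0, hn⟩
  have hL (i u v) : ‖g' i u - g' i v‖ ≤ Lmax * ‖u - v‖ :=
    (hsmooth i u v).trans (by gcongr; exact hLmax.2 ⟨i, rfl⟩)
  simpa [uniformMean, div_eq_mul_inv, mul_assoc, mul_left_comm, mul_comm] using
    minibatch_growth_condition_general hm hgrad hconv hL (by simpa [uniformMean] using hf) hstar
      (by simpa [uniformMean] using sub_le_norm_sq_div_of_strongly_convex hm hsc x xstar) hb
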